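/- arXiv:1603.03496 — 5 statements merged into one kernel-verified Lean document; each statement's English description precedes it below -/
import Mathlib

section
/- For every integer d ≥ 1, every real a > 0, every real ν > 0 and every real r ≥ 0, the identity ∫₀^r y^{d-1} (a + y²)^{-ν-d/2} dy = (1/(2 a^ν)) ∫₀^{r²/(a+r²)} x^{d/2-1} (1-x)^{ν-1} dx holds. -/
open MeasureTheory

lemma pointwise_aux (d : ℕ) (hd : 1 ≤ d) (a ν y s : ℝ) (ha : 0 < a) (hy : 0 < y) (hs : 0 < s) :
    y ^ (d - 1) * s ^ (-ν - (d : ℝ) / 2) =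
      1 / (2 * a ^ ν) * ((y ^ 2 / s) ^ ((d : ℝ) / 2 - 1) * (a / s) ^ (ν - 1)
        * (2 * a * y / s ^ 2)) := by
  obtain ⟨u, rfl⟩ : ∃ u, Real.exp u = y := ⟨_, Real.exp_log hy⟩
  obtain ⟨v, rfl⟩ : ∃ u, Real.exp u = s := ⟨_, Real.exp_log hs⟩
  obtain ⟨w, rfl⟩ : ∃ u, Real.exp u = a := ⟨_, Real.exp_log ha⟩
  have e : ∀ p q r : ℝ, 1 / (2 * r) * (p * q * (2 * Real.exp w * Real.exp u / Real.exp v ^ 2))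
      = p * q * (Real.exp w * Real.exp u / Real.exp v ^ 2) / r := by
    intro p q r
    rw [one_div, mul_inv]; ring
  rw [e]
  simp only [← Real.exp_nat_mul, ← Real.exp_sub, ← Real.exp_mul, ← Real.exp_add]
  congr 1
  push_cast [Nat.cast_sub hd]
  ring

/-- For every integer `d ≥ 1`, every real `a > 0`, `ν > 0` and `r ≥ 0`,
`∫₀^r y^(d-1) (a + y²)^(-ν-d/2) dy = (1/(2 a^ν)) ∫₀^{r²/(a+r²)} x^(d/2-1) (1-x)^(ν-1) dx`,
the change of variables `x = y²/(a+y²)`. -/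
theorem statement0 (d : ℕ) (hd : 1 ≤ d) (a ν r : ℝ) (ha : 0 < a) (hν : 0 < ν) (hr : 0 ≤ r) :
    ∫ y in (0:ℝ)..r, y ^ (d - 1) * (a + y ^ 2) ^ (-ν - (d : ℝ) / 2) =
      1 / (2 * a ^ ν) *
        ∫ x in (0:ℝ)..(r ^ 2 / (a + r ^ 2)), x ^ ((d : ℝ) / 2 - 1) * (1 - x) ^ (ν - 1) := by
  have hs : ∀ y : ℝ, 0 < a + y ^ 2 := fun y => by positivity
  have hder : ∀ y : ℝ, HasDerivAt (fun y : ℝ => y ^ 2 / (a + y ^ 2))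
      (2 * a * y / (a + y ^ 2) ^ 2) y := by
    intro y
    have h1 : HasDerivAt (fun y : ℝ => y ^ 2) (2 * y) y := by
      simpa using hasDerivAt_pow 2 y
    have h2 := h1.fun_div (h1.const_add a) (hs y).ne'
    have h3 : (2 * y * (a + y ^ 2) - y ^ 2 * (2 * y)) / (a + y ^ 2) ^ 2
        = 2 * a * y / (a + y ^ 2) ^ 2 := by
      congr 1
      ring
    rw [← h3]
    exact h2
  have key := intervalIntegral.integral_comp_mul_deriv_of_deriv_nonneg (a := 0) (b := r)
    (f := fun y : ℝ => y ^ 2 / (a + y ^ 2)) (f' := fun y => 2 * a * y / (a + y ^ 2) ^ 2)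
    (g := fun x => x ^ ((d : ℝ) / 2 - 1) * (1 - x) ^ (ν - 1))
    (fun y _ => (hder y).continuousAt.continuousWithinAt) (fun y _ => hder y)
    (fun y hy => by
      rw [min_eq_left hr] at hy
      have := hy.1
      positivity)
  have h0 : (0:ℝ) ^ 2 / (a + 0 ^ 2) = 0 := by simp
  simp only [h0] at key
  rw [← key, ← intervalIntegral.integral_const_mul]
  refine intervalIntegral.integral_congr_ae (Filter.Eventually.of_forall fun y hy => ?_)
  rw [Set.uIoc_of_le hr] at hy
  have h1 : 1 - y ^ 2 / (a + y ^ 2) = a / (a + y ^ 2) := by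
    have := (hs y).ne'
    field_simp
    ring
  simp only [Function.comp, h1]
  exact pointwise_aux d hd a ν y _ ha hy.1 (hs y)
end

section
/- Let d ≥ 1 be an integer and ν, ρ, σ > 0 reals, and let C be the Matérn spectral density on ℝ^d with parameters ν, ρ, σ. Then (i) ∫_{ℝ^d} C(‖k‖) dk = (2π)^d σ², and (ii) for every r ≥ 0, (2 π^{d/2} / ((2π)^d σ² Γ(d/2))) ∫₀^r ξ^{d-1} C(ξ) dξ = I_{r²/(4ν/ρ² + r²)}(d/2, ν). In other words, the normalized radial cumulative distribution function of the Matérn spectral density equals the regularized incomplete beta function evaluated at r²/(4ν/ρ² + r²) with parameters (d/2, ν). -/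
open MeasureTheory

/-- The Matérn spectral density on `ℝ^d` with parameters `ν, ρ, σ`. -/
noncomputable def maternSpectralDensity (d : ℕ) (ν ρ σ : ℝ) (ξ : ℝ) : ℝ :=
  σ ^ 2 * 2 ^ d * Real.pi ^ ((d : ℝ) / 2) * (Real.Gamma (ν + (d : ℝ) / 2) / Real.Gamma ν) *
    (4 * ν / ρ ^ 2) ^ ν * (4 * ν / ρ ^ 2 + ξ ^ 2) ^ (-ν - (d : ℝ) / 2)

/-- The regularized incomplete beta function
`I_x(p,q) = (∫₀^x t^(p-1)(1-t)^(q-1) dt) / B(p,q)` with `B(p,q) = Γ(p)Γ(q)/Γ(p+q)`. -/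
noncomputable def regIncompleteBeta (p q x : ℝ) : ℝ :=
  (∫ t in (0:ℝ)..x, t ^ (p - 1) * (1 - t) ^ (q - 1)) /
    (Real.Gamma p * Real.Gamma q / Real.Gamma (p + q))

theorem matern_deriv (a : ℝ) (ha : 0 < a) (x : ℝ) :
    HasDerivAt (fun ξ : ℝ => ξ ^ 2 / (a + ξ ^ 2)) (2 * a * x / (a + x ^ 2) ^ 2) x := by
  have hne : a + x ^ 2 ≠ 0 := by positivity
  have h1 : HasDerivAt (fun ξ : ℝ => ξ ^ 2) (2 * x) x := by
    simpa using hasDerivAt_pow 2 x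
  have h := h1.div (h1.const_add a) hne
  refine HasDerivAt.congr_deriv h ?_
  congr 1
  ring

theorem matern_key (d : ℕ) (hd : 1 ≤ d) (ν ρ σ : ℝ) (hν : 0 < ν) (hρ : 0 < ρ)
    (x : ℝ) (hx : 0 < x) :
    x ^ (d - 1) * maternSpectralDensity d ν ρ σ x =
      (σ ^ 2 * 2 ^ d * Real.pi ^ ((d : ℝ) / 2) *
        (Real.Gamma (ν + (d : ℝ) / 2) / Real.Gamma ν) / 2) *
      (((x ^ 2 / (4 * ν / ρ ^ 2 + x ^ 2)) ^ ((d : ℝ) / 2 - 1) *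
        (1 - x ^ 2 / (4 * ν / ρ ^ 2 + x ^ 2)) ^ (ν - 1)) *
        (2 * (4 * ν / ρ ^ 2) * x / (4 * ν / ρ ^ 2 + x ^ 2) ^ 2)) := by
  unfold maternSpectralDensity
  have ha : 0 < 4 * ν / ρ ^ 2 := by positivity
  generalize 4 * ν / ρ ^ 2 = a at *
  have hs : 0 < a + x ^ 2 := by positivity
  have e1 : 1 - x ^ 2 / (a + x ^ 2) = a / (a + x ^ 2) := by
    field_simp; ring
  rw [e1, Real.div_rpow (by positivity) hs.le, Real.div_rpow ha.le hs.le]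
  have e2 : x ^ (d - 1) = (x ^ 2) ^ ((d : ℝ) / 2 - 1) * x := by
    rw [← Real.rpow_natCast x 2, ← Real.rpow_mul hx.le, ← Real.rpow_natCast x (d - 1),
      ← Real.rpow_add_one hx.ne', Nat.cast_sub hd]
    congr 1; push_cast; ring
  have e3 : a ^ ν = a ^ (ν - 1) * a := by
    rw [← Real.rpow_add_one ha.ne']; congr 1; ring
  have e4 : (a + x ^ 2) ^ (-ν - (d : ℝ) / 2) * ((a + x ^ 2) ^ ((d : ℝ) / 2 - 1) *
      (a + x ^ 2) ^ (ν - 1) * (a + x ^ 2) ^ 2) = 1 := by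
    rw [← Real.rpow_natCast (a + x ^ 2) 2, ← Real.rpow_add hs, ← Real.rpow_add hs,
      ← Real.rpow_add hs]
    refine Eq.trans ?_ (Real.rpow_zero (a + x ^ 2))
    congr 1; push_cast; ring
  have hp1 := (Real.rpow_pos_of_pos hs ((d : ℝ) / 2 - 1)).ne'
  have hp2 := (Real.rpow_pos_of_pos hs (ν - 1)).ne'
  rw [eq_div_of_mul_eq (by positivity) e4, e2, e3]
  generalize Real.Gamma (ν + (d : ℝ) / 2) / Real.Gamma ν = G
  field_simp

theorem matern_beta (p q : ℝ) (hp : 0 < p) (hq : 0 < q) :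
    ∫ t in Set.Ioo (0:ℝ) 1, t ^ (p - 1) * (1 - t) ^ (q - 1) =
      Real.Gamma p * Real.Gamma q / Real.Gamma (p + q) := by
  have h := Complex.betaIntegral_eq_Gamma_mul_div (u := (p : ℂ)) (v := (q : ℂ))
    (by simpa) (by simpa)
  rw [← Complex.ofReal_add, Complex.Gamma_ofReal, Complex.Gamma_ofReal, Complex.Gamma_ofReal] at h
  rw [Complex.betaIntegral, intervalIntegral.integral_of_le zero_le_one,
    integral_Ioc_eq_integral_Ioo] at h
  have h2 : ∫ t in Set.Ioo (0:ℝ) 1, (t : ℂ) ^ ((p : ℂ) - 1) * (1 - (t : ℂ)) ^ ((q : ℂ) - 1) =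
      ∫ t in Set.Ioo (0:ℝ) 1, ((t ^ (p - 1) * (1 - t) ^ (q - 1) : ℝ) : ℂ) := by
    refine setIntegral_congr_fun measurableSet_Ioo fun t ht => ?_
    have h1 : 0 ≤ 1 - t := by linarith [ht.2]
    simp only [Complex.ofReal_mul]
    rw [Complex.ofReal_cpow ht.1.le, Complex.ofReal_cpow h1]
    push_cast
    rfl
  rw [h2, integral_complex_ofReal] at h
  exact_mod_cast h

theorem matern_image (a : ℝ) (ha : 0 < a) :
    (fun ξ : ℝ => ξ ^ 2 / (a + ξ ^ 2)) '' Set.Ioi 0 = Set.Ioo 0 1 := by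
  ext t
  simp only [Set.mem_image, Set.mem_Ioi, Set.mem_Ioo]
  constructor
  · rintro ⟨x, hx, rfl⟩
    refine ⟨by positivity, ?_⟩
    rw [div_lt_one (by positivity)]
    linarith
  · rintro ⟨h0, h1⟩
    have h1' : 0 < 1 - t := by linarith
    refine ⟨Real.sqrt (a * t / (1 - t)), Real.sqrt_pos.2 (by positivity), ?_⟩
    rw [Real.sq_sqrt (by positivity)]
    have : a + a * t / (1 - t) = a / (1 - t) := by field_simp; ring
    rw [this]
    field_simp

theorem matern_inj (a : ℝ) (ha : 0 < a) :
    Set.InjOn (fun ξ : ℝ => ξ ^ 2 / (a + ξ ^ 2)) (Set.Ioi 0) := by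
  intro x hx y hy h
  simp only [Set.mem_Ioi] at hx hy
  simp only at h
  rw [div_eq_div_iff (by positivity) (by positivity)] at h
  have : x ^ 2 = y ^ 2 := mul_left_cancel₀ ha.ne' (by linarith)
  exact (pow_left_inj₀ hx.le hy.le two_ne_zero).1 this

theorem matern_pi (d : ℕ) :
    Real.pi ^ ((d : ℝ) / 2) * Real.pi ^ ((d : ℝ) / 2) = Real.pi ^ d := by
  rw [← Real.rpow_add Real.pi_pos, add_halves, Real.rpow_natCast]

/-- (i) The total integral of the Matérn spectral density on `ℝ^d` is `(2π)^d σ²`, and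
(ii) its normalized radial cumulative distribution function equals the regularized
incomplete beta function `I_{r²/(4ν/ρ² + r²)}(d/2, ν)`. -/
theorem statement2 (d : ℕ) (hd : 1 ≤ d) (ν ρ σ : ℝ) (hν : 0 < ν) (hρ : 0 < ρ) (hσ : 0 < σ) :
    (∫ k : EuclideanSpace ℝ (Fin d), maternSpectralDensity d ν ρ σ ‖k‖)
        = (2 * Real.pi) ^ d * σ ^ 2 ∧
      ∀ r : ℝ, 0 ≤ r →
        2 * Real.pi ^ ((d : ℝ) / 2) / ((2 * Real.pi) ^ d * σ ^ 2 * Real.Gamma ((d : ℝ) / 2)) *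
            ∫ ξ in (0:ℝ)..r, ξ ^ (d - 1) * maternSpectralDensity d ν ρ σ ξ
          = regIncompleteBeta ((d : ℝ) / 2) ν (r ^ 2 / (4 * ν / ρ ^ 2 + r ^ 2)) := by
  have ha : 0 < 4 * ν / ρ ^ 2 := by positivity
  have hp : 0 < (d : ℝ) / 2 := by
    have : (0:ℝ) < d := by exact_mod_cast hd
    positivity
  have hG1 := Real.Gamma_pos_of_pos hp
  have hG2 := Real.Gamma_pos_of_pos hν
  have hG3 := Real.Gamma_pos_of_pos (add_pos hp hν)
  have hpi := Real.pi_pos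
  have hpp := matern_pi d
  have hpd : 0 < Real.pi ^ ((d : ℝ) / 2) := Real.rpow_pos_of_pos hpi _
  constructor
  · have : Nonempty (Fin d) := ⟨⟨0, hd⟩⟩
    rw [integral_fun_norm_addHaar volume (maternSpectralDensity d ν ρ σ)]
    simp only [finrank_euclideanSpace, Fintype.card_fin, smul_eq_mul, nsmul_eq_mul]
    rw [setIntegral_congr_fun measurableSet_Ioi
      (fun x hx => matern_key d hd ν ρ σ hν hρ x hx), integral_const_mul]
    have hcv := integral_image_eq_integral_abs_deriv_smul (measurableSet_Ioi (a := (0:ℝ)))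
      (fun x _ => (matern_deriv _ ha x).hasDerivWithinAt) (matern_inj _ ha)
      (fun t : ℝ => t ^ ((d : ℝ) / 2 - 1) * (1 - t) ^ (ν - 1))
    rw [matern_image _ ha, matern_beta _ _ hp hν] at hcv
    have h2 : ∫ x in Set.Ioi (0:ℝ), (((x ^ 2 / (4 * ν / ρ ^ 2 + x ^ 2)) ^ ((d : ℝ) / 2 - 1) *
        (1 - x ^ 2 / (4 * ν / ρ ^ 2 + x ^ 2)) ^ (ν - 1)) *
        (2 * (4 * ν / ρ ^ 2) * x / (4 * ν / ρ ^ 2 + x ^ 2) ^ 2)) =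
        Real.Gamma ((d : ℝ) / 2) * Real.Gamma ν / Real.Gamma ((d : ℝ) / 2 + ν) := by
      rw [hcv]
      refine setIntegral_congr_fun measurableSet_Ioi fun x hx => ?_
      have hx' : (0:ℝ) < x := hx
      simp only [smul_eq_mul]
      rw [abs_of_nonneg (by positivity), mul_comm]
    rw [h2]
    have hv : (volume : Measure (EuclideanSpace ℝ (Fin d))).real (Metric.ball 0 1) =
        Real.pi ^ ((d : ℝ) / 2) / ((d : ℝ) / 2 * Real.Gamma ((d : ℝ) / 2)) := by
      rw [Measure.real, EuclideanSpace.volume_ball]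
      simp only [Fintype.card_fin, ENNReal.ofReal_one, one_pow, one_mul]
      rw [ENNReal.toReal_ofReal (by have := Real.Gamma_pos_of_pos (show 0 < (d:ℝ)/2 + 1 by positivity); positivity),
        Real.Gamma_add_one hp.ne', Real.sqrt_eq_rpow, ← Real.rpow_natCast, ← Real.rpow_mul hpi.le]
      congr 2; ring
    rw [hv, add_comm ν, mul_pow, ← hpp]
    have hd0 : (d : ℝ) ≠ 0 := by intro h; simp [h] at hp
    generalize Real.Gamma ((d : ℝ) / 2) = A at *
    generalize Real.Gamma ((d : ℝ) / 2 + ν) = B at *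
    generalize Real.pi ^ ((d : ℝ) / 2) = P at *
    field_simp
  · intro r hr
    have h1 : ∫ ξ in (0:ℝ)..r, ξ ^ (d - 1) * maternSpectralDensity d ν ρ σ ξ =
      ∫ x in (0:ℝ)..r, (σ ^ 2 * 2 ^ d * Real.pi ^ ((d : ℝ) / 2) *
        (Real.Gamma (ν + (d : ℝ) / 2) / Real.Gamma ν) / 2) *
      (((x ^ 2 / (4 * ν / ρ ^ 2 + x ^ 2)) ^ ((d : ℝ) / 2 - 1) *
        (1 - x ^ 2 / (4 * ν / ρ ^ 2 + x ^ 2)) ^ (ν - 1)) *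
        (2 * (4 * ν / ρ ^ 2) * x / (4 * ν / ρ ^ 2 + x ^ 2) ^ 2)) := by
      rw [intervalIntegral.integral_of_le hr, intervalIntegral.integral_of_le hr]
      exact setIntegral_congr_fun measurableSet_Ioc
        fun x hx => matern_key d hd ν ρ σ hν hρ x hx.1
    have hcv := intervalIntegral.integral_comp_mul_deriv_of_deriv_nonneg (a := 0) (b := r)
      (f := fun ξ : ℝ => ξ ^ 2 / (4 * ν / ρ ^ 2 + ξ ^ 2))
      (f' := fun x => 2 * (4 * ν / ρ ^ 2) * x / (4 * ν / ρ ^ 2 + x ^ 2) ^ 2)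
      (g := fun t : ℝ => t ^ ((d : ℝ) / 2 - 1) * (1 - t) ^ (ν - 1))
      (fun x _ => (matern_deriv _ ha x).continuousAt.continuousWithinAt)
      (fun x _ => matern_deriv _ ha x)
      (fun x hx => by
        have hx0 : 0 < x := by simpa [hr] using hx.1
        positivity)
    simp only [Function.comp_apply] at hcv
    rw [h1, intervalIntegral.integral_const_mul, hcv, regIncompleteBeta, add_comm ν, mul_pow,
      ← hpp]
    have z : (0:ℝ) ^ 2 / (4 * ν / ρ ^ 2 + 0 ^ 2) = 0 := by simp
    rw [z]
    generalize (∫ t in (0:ℝ)..(r ^ 2 / (4 * ν / ρ ^ 2 + r ^ 2)),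
      t ^ ((d : ℝ) / 2 - 1) * (1 - t) ^ (ν - 1)) = J
    generalize Real.Gamma ((d : ℝ) / 2) = A at *
    generalize Real.Gamma ((d : ℝ) / 2 + ν) = B at *
    generalize Real.pi ^ ((d : ℝ) / 2) = P at *
    field_simp
end

section
/- Let d ≥ 1 be an integer and let C, C̃ : [0,∞) → [0,∞) be measurable functions such that the measures μ and ν on ℝ^d with Lebesgue densities k ↦ C(‖k‖) and k ↦ C̃(‖k‖) both have the same finite total mass σ² > 0. Define F(r) = μ({k : ‖k‖ ≤ r})/σ² and F̃(r) = ν({k : ‖k‖ ≤ r})/σ², and assume that F̃ is continuous and strictly increasing on [0,∞) with F̃(0) = 0 and sup_r F̃(r) = 1, so that F̃ has an inverse F̃^{-1} : [0,1) → [0,∞). Define T : ℝ^d → ℝ^d by T(k) = F̃^{-1}(F(‖k‖)) · k/‖k‖ when k ≠ 0 and F(‖k‖) < 1, and T(k) = 0 otherwise. Then the pushforward of μ under T equals ν. -/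
open MeasureTheory

theorem oneD_level (m : Measure ℝ) [IsFiniteMeasure m] [NullSingletonClass m] (h0 : m (Set.Iic 0) = 0)
    (M : ℝ) (hM : 0 < M) (hm : m.real Set.univ = M) (F : ℝ → ℝ)
    (hF : ∀ r, F r = m.real (Set.Iic r) / M) (u : ℝ) (hu0 : 0 ≤ u) (hu1 : u < 1) :
    m.real {r | F r ≤ u} = u * M := by
  have hmono : Monotone F := by
    intro a b hab
    rw [hF, hF]
    gcongr
    exact measure_ne_top _ _
  have hcont : Continuous F := by
    have h1 : Continuous fun b => ∫ x in (0:ℝ)..b, (1:ℝ) ∂m :=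
      intervalIntegral.continuous_primitive (fun a b => by simp) 0
    have h2 : F = fun b => (∫ x in (0:ℝ)..b, (1:ℝ) ∂m) / M := by
      funext b
      rw [hF, ← intervalIntegral.integral_Iic_sub_Iic (by simp) (by simp)]
      simp [Measure.real, h0]
    rw [h2]
    exact h1.div_const M
  have hF0 : F 0 = 0 := by rw [hF, Measure.real, h0]; simp
  have htend : Filter.Tendsto F Filter.atTop (nhds 1) := by
    have h1 := (ENNReal.tendsto_toReal (measure_ne_top m Set.univ)).comp
      (tendsto_measure_Iic_atTop m)
    have h2 := h1.div_const M
    have h3 : (m Set.univ).toReal / M = 1 := by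
      change m.real Set.univ / M = 1
      rw [hm]; field_simp
    rw [h3] at h2
    refine h2.congr fun r => ?_
    rw [hF]; rfl
  obtain ⟨R, hR⟩ := (htend.eventually (lt_mem_nhds hu1)).exists
  obtain ⟨r0, hr0⟩ := mem_range_of_exists_le_of_exists_ge hcont ⟨0, hF0.trans_le hu0⟩ ⟨R, hR.le⟩
  have hbdd : BddAbove (F ⁻¹' {u}) := ⟨R, fun r hr => by
    by_contra h
    have := hmono (not_le.1 h).le
    have hr' : F r = u := hr
    linarith⟩
  have hclosed : IsClosed (F ⁻¹' {u}) := isClosed_singleton.preimage hcont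
  have hs := hclosed.csSup_mem ⟨r0, hr0⟩ hbdd
  set s := sSup (F ⁻¹' {u}) with hsdef
  have hs' : F s = u := hs
  have hA : {r | F r ≤ u} = Set.Iic s := by
    ext r
    constructor
    · intro hr
      by_contra h
      have h1 := hmono (not_le.1 h).le
      have h2 : F r = u := le_antisymm hr (hs' ▸ h1)
      exact h (le_csSup hbdd h2)
    · intro hr
      exact (hmono hr).trans hs'.le
  rw [hA, ← hs', hF]
  field_simp

theorem oneD_map (m n : Measure ℝ) [IsFiniteMeasure m] [IsFiniteMeasure n] [NullSingletonClass m]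
    (h0 : m (Set.Iic 0) = 0) (hn0 : n (Set.Iic 0) = 0)
    (M : ℝ) (hM : 0 < M) (hm : m.real Set.univ = M) (hn : n.real Set.univ = M) (F Ftil : ℝ → ℝ)
    (hF : ∀ r, F r = m.real (Set.Iic r) / M)
    (hFtil : ∀ r, Ftil r = n.real (Set.Iic r) / M)
    (hFtilMono : StrictMonoOn Ftil (Set.Ici 0))
    (Finv : ℝ → ℝ)
    (hFinv : ∀ u ∈ Set.Ico (0:ℝ) 1, 0 ≤ Finv u ∧ Ftil (Finv u) = u)
    (g : ℝ → ℝ) (hg : ∀ r, g r = if F r < 1 then Finv (F r) else 0) :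
    Measurable g ∧ Measure.map g m = n := by
  have hmono : Monotone F := by
    intro a b hab
    rw [hF, hF]
    gcongr
    exact measure_ne_top _ _
  have hFm : Measurable F := hmono.measurable
  have hFnn : ∀ r, 0 ≤ F r := fun r => by rw [hF]; positivity
  have hFtnn : ∀ r, 0 ≤ Ftil r := fun r => by rw [hFtil]; positivity
  have hFtle : ∀ r, Ftil r ≤ 1 := fun r => by
    rw [hFtil, div_le_one hM, ← hn]
    exact measureReal_mono (Set.subset_univ _)
  have hFtlt : ∀ r, 0 ≤ r → Ftil r < 1 := fun r hr =>
    (hFtilMono (Set.mem_Ici.2 hr) (Set.mem_Ici.2 (by linarith : (0:ℝ) ≤ r + 1))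
      (by linarith)).trans_le (hFtle _)
  have hgnn : ∀ r, 0 ≤ g r := fun r => by
    rw [hg]; split_ifs with h
    · exact (hFinv _ ⟨hFnn r, h⟩).1
    · exact le_rfl
  have hneg : ∀ t < 0, g ⁻¹' Set.Iic t = ∅ := fun t ht => by
    ext r
    simp only [Set.mem_preimage, Set.mem_Iic, Set.mem_empty_iff_false, iff_false, not_le]
    exact ht.trans_le (hgnn r)
  have hpos : ∀ t, 0 ≤ t → g ⁻¹' Set.Iic t = {r | F r ≤ Ftil t} ∪ {r | 1 ≤ F r} := fun t ht => by
    ext r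
    simp only [Set.mem_preimage, Set.mem_Iic, Set.mem_union, Set.mem_ofPred_eq, hg]
    split_ifs with h
    · have h1 := hFinv _ ⟨hFnn r, h⟩
      rw [← hFtilMono.le_iff_le (Set.mem_Ici.2 h1.1) (Set.mem_Ici.2 ht), h1.2]
      constructor
      · exact Or.inl
      · rintro (h2 | h2)
        · exact h2
        · linarith
    · exact ⟨fun _ => Or.inr (not_lt.1 h), fun _ => ht⟩
  have hgm : Measurable g := by
    refine measurable_of_Iic fun t => ?_
    rcases lt_or_ge t 0 with ht | ht
    · rw [hneg t ht]; exact MeasurableSet.empty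
    · rw [hpos t ht]
      exact (measurableSet_le hFm measurable_const).union (measurableSet_le measurable_const hFm)
  have hnull : m {r | 1 ≤ F r} = 0 := by
    rw [← measureReal_eq_zero_iff]
    by_contra hx
    set x := m.real {r | 1 ≤ F r} with hxdef
    have hx0 : 0 < x := lt_of_le_of_ne measureReal_nonneg (Ne.symm hx)
    have hxM : x ≤ M := by rw [← hm]; exact measureReal_mono (Set.subset_univ _)
    have hq : 0 < x / (2 * M) := by positivity
    have hq1 : x / (2 * M) ≤ 1 := by rw [div_le_one (by positivity)]; linarith
    have h1 := oneD_level m h0 M hM hm F hF (1 - x / (2 * M)) (by linarith) (by linarith)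
    have h2 : x ≤ m.real {r | F r ≤ 1 - x / (2 * M)}ᶜ := by
      refine measureReal_mono fun r hr => ?_
      simp only [Set.mem_compl_iff, Set.mem_ofPred_eq, not_le] at hr ⊢
      linarith
    rw [measureReal_compl (measurableSet_le hFm measurable_const), h1, hm] at h2
    have h3 : M - (1 - x / (2 * M)) * M = x / 2 := by field_simp; ring
    linarith
  refine ⟨hgm, ?_⟩
  refine Measure.ext_of_Iic _ _ fun t => ?_
  rw [Measure.map_apply hgm measurableSet_Iic]
  rcases lt_or_ge t 0 with ht | ht
  · rw [hneg t ht, measure_empty]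
    exact (measure_mono_null (Set.Iic_subset_Iic.2 ht.le) hn0).symm
  · have hun : m ({r | F r ≤ Ftil t} ∪ {r | 1 ≤ F r}) = m {r | F r ≤ Ftil t} :=
      le_antisymm ((measure_union_le _ _).trans (by rw [hnull, add_zero]))
        (measure_mono Set.subset_union_left)
    rw [hpos t ht, hun,
      ← measureReal_eq_measureReal_iff,
      oneD_level m h0 M hM hm F hF _ (hFtnn t) (hFtlt t ht), hFtil]
    field_simp

/-- radial part of Lebesgue measure, on the real line -/
noncomputable def radialRho (n : ℕ) : Measure ℝ := (Measure.volumeIoiPow n).map Subtype.val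

instance radialRho_sfinite (n : ℕ) : SFinite (radialRho n) := by
  unfold radialRho; infer_instance

theorem radialRho_Iic (n : ℕ) : radialRho n (Set.Iic 0) = 0 := by
  rw [radialRho, Measure.map_apply measurable_subtype_coe measurableSet_Iic]
  have : (Subtype.val : Set.Ioi (0:ℝ) → ℝ) ⁻¹' Set.Iic 0 = ∅ := by
    ext ⟨x, hx⟩
    have hx' : 0 < x := hx
    simp [hx']
  rw [this, measure_empty]

instance radialRho_noAtoms (n : ℕ) : NullSingletonClass (radialRho n) := by
  refine ⟨fun x => ?_⟩
  rw [radialRho, Measure.map_apply measurable_subtype_coe (measurableSet_singleton _)]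
  refine withDensity_absolutelyContinuous _ _ ?_
  rw [comap_subtype_coe_apply measurableSet_Ioi]
  exact measure_mono_null (Set.image_preimage_subset _ _) (by simp)

section polar
variable {E : Type*} [NormedAddCommGroup E] [NormedSpace ℝ E] [MeasurableSpace E] [BorelSpace E]
  [FiniteDimensional ℝ E] [Nontrivial E]

/-- polar coordinates -/
def polarMap (E : Type*) [NormedAddCommGroup E] [NormedSpace ℝ E]
    (p : Metric.sphere (0:E) 1 × ℝ) : E := p.2 • p.1.1

theorem polarMap_meas : Measurable (polarMap E) := by
  have : Continuous (polarMap E) := by unfold polarMap; fun_prop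
  exact this.measurable

theorem polar_volume (vol : Measure E) [vol.IsAddHaarMeasure] :
    vol = Measure.map (polarMap E) (vol.toSphere.prod (radialRho (Module.finrank ℝ E - 1))) := by
  have h := vol.measurePreserving_homeomorphUnitSphereProd
  have h1 : (vol.comap (Subtype.val : ({0}ᶜ : Set E) → E)).map Subtype.val = vol := by
    rw [map_comap_subtype_coe (measurableSet_singleton _).compl]
    refine Measure.restrict_eq_self_of_ae_mem ?_
    rw [ae_iff]
    simp
  have h2 : vol.comap (Subtype.val : ({0}ᶜ : Set E) → E) =
      (vol.toSphere.prod (Measure.volumeIoiPow (Module.finrank ℝ E - 1))).map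
        (homeomorphUnitSphereProd E).symm := by
    rw [← h.map_eq, Measure.map_map (Homeomorph.measurable _) (Homeomorph.measurable _)]
    simp
  have h3 : vol.toSphere.prod (radialRho (Module.finrank ℝ E - 1)) =
      (vol.toSphere.prod (Measure.volumeIoiPow (Module.finrank ℝ E - 1))).map
        (Prod.map id Subtype.val) := by
    rw [← Measure.map_prod_map _ _ measurable_id measurable_subtype_coe, Measure.map_id, radialRho]
  rw [h3, Measure.map_map polarMap_meas (measurable_id.prodMap measurable_subtype_coe)]
  conv_lhs => rw [← h1, h2, Measure.map_map measurable_subtype_coe (Homeomorph.measurable _)]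
  rfl

theorem polar_withDensity (vol : Measure E) [vol.IsAddHaarMeasure] (c : ℝ → ENNReal)
    (hc : Measurable c) :
    vol.withDensity (fun k => c ‖k‖) = Measure.map (polarMap E)
      (vol.toSphere.prod ((radialRho (Module.finrank ℝ E - 1)).withDensity c)) := by
  rw [prod_withDensity_right hc]
  have hpos : ∀ᵐ p ∂(vol.toSphere.prod (radialRho (Module.finrank ℝ E - 1))), 0 < p.2 := by
    refine Measure.quasiMeasurePreserving_snd.ae (p := fun r : ℝ => 0 < r) ?_
    rw [ae_iff]
    convert radialRho_Iic (Module.finrank ℝ E - 1) using 2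
    ext r; simp
  ext s hs
  rw [withDensity_apply _ hs, Measure.map_apply polarMap_meas hs,
    withDensity_apply _ (polarMap_meas hs)]
  conv_lhs => rw [polar_volume vol]
  rw [setLIntegral_map (f := fun a => c ‖a‖) hs (hc.comp measurable_norm) polarMap_meas]
  refine lintegral_congr_ae (ae_restrict_of_ae ?_)
  filter_upwards [hpos] with p hp
  have : ‖polarMap E p‖ = p.2 := by
    simp [polarMap, norm_smul, abs_of_pos hp]
  rw [this]

end polar

open Classical in
theorem radial_aux {E : Type*} [NormedAddCommGroup E] [NormedSpace ℝ E]
    [MeasurableSpace E] [BorelSpace E] [FiniteDimensional ℝ E] [Nontrivial E]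
    (S : Measure (Metric.sphere (0:E) 1)) [IsFiniteMeasure S] (hSne : S Set.univ ≠ 0)
    (m n : Measure ℝ) [SFinite m] [SFinite n] [NullSingletonClass m]
    (hm0 : m (Set.Iic 0) = 0) (hn0 : n (Set.Iic 0) = 0)
    (μ ν : Measure E)
    (hμ' : μ = Measure.map (polarMap E) (S.prod m))
    (hν' : ν = Measure.map (polarMap E) (S.prod n))
    (σ2 : ℝ) (hσ2 : 0 < σ2)
    (hμmass : μ Set.univ = ENNReal.ofReal σ2)
    (hνmass : ν Set.univ = ENNReal.ofReal σ2)
    (F Ftil : ℝ → ℝ)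
    (hF : ∀ r, F r = (μ {k | ‖k‖ ≤ r}).toReal / σ2)
    (hFtil : ∀ r, Ftil r = (ν {k | ‖k‖ ≤ r}).toReal / σ2)
    (hFtilMono : StrictMonoOn Ftil (Set.Ici 0))
    (Finv : ℝ → ℝ)
    (hFinv : ∀ u ∈ Set.Ico (0:ℝ) 1, 0 ≤ Finv u ∧ Ftil (Finv u) = u)
    (T : E → E)
    (hT : ∀ k, T k = if k ≠ 0 ∧ F ‖k‖ < 1 then (Finv (F ‖k‖) / ‖k‖) • k else 0) :
    Measure.map T μ = ν := by
  have hs : 0 < S.real Set.univ := ENNReal.toReal_pos hSne (measure_ne_top _ _)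
  have huniv : ∀ k : Measure ℝ, SFinite k →
      Measure.map (polarMap (E)) (S.prod k) Set.univ
        = S Set.univ * k Set.univ := fun k _ => by
    rw [Measure.map_apply polarMap_meas MeasurableSet.univ, Set.preimage_univ,
      ← Set.univ_prod_univ, Measure.prod_prod]
  have hball : ∀ k : Measure ℝ, SFinite k → k (Set.Iic 0) = 0 → ∀ r,
      Measure.map (polarMap (E)) (S.prod k) {k | ‖k‖ ≤ r}
        = S Set.univ * k (Set.Iic r) := fun k _ hk r => by
    rw [Measure.map_apply polarMap_meas (measurableSet_le measurable_norm measurable_const),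
      ← Measure.prod_prod]
    refine measure_congr ?_
    have hpos : ∀ᵐ p ∂(S.prod k), 0 < p.2 := by
      refine Measure.quasiMeasurePreserving_snd.ae (p := fun r : ℝ => 0 < r) ?_
      rw [ae_iff]
      convert hk using 2
      ext r; simp
    filter_upwards [hpos] with p hp
    have h1 : ‖polarMap (E) p‖ = p.2 := by
      simp [polarMap, norm_smul, abs_of_pos hp]
    apply propext
    change ‖polarMap (E) p‖ ≤ r ↔ p ∈ Set.univ ×ˢ Set.Iic r
    rw [h1]; simp
  have hmu : S Set.univ * m Set.univ = ENNReal.ofReal σ2 := by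
    rw [← huniv m inferInstance, ← hμ', hμmass]
  have hnu : S Set.univ * n Set.univ = ENNReal.ofReal σ2 := by
    rw [← huniv n inferInstance, ← hν', hνmass]
  have hfin : ∀ k : Measure ℝ, S Set.univ * k Set.univ = ENNReal.ofReal σ2 →
      IsFiniteMeasure k := fun k hk => ⟨by
    rw [lt_top_iff_ne_top]
    intro h
    rw [h, ENNReal.mul_top hSne] at hk
    exact ENNReal.ofReal_ne_top hk.symm⟩
  have hfm := hfin m hmu
  have hfn := hfin n hnu
  have hreal : ∀ k : Measure ℝ, S Set.univ * k Set.univ = ENNReal.ofReal σ2 →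
      k.real Set.univ = σ2 / S.real Set.univ := fun k hk => by
    have := congrArg ENNReal.toReal hk
    rw [ENNReal.toReal_mul, ENNReal.toReal_ofReal hσ2.le] at this
    rw [eq_div_iff hs.ne', mul_comm]
    exact this
  have hFF : ∀ r, F r = m.real (Set.Iic r) / (σ2 / S.real Set.univ) := fun r => by
    rw [hF, hμ', hball m inferInstance hm0, ENNReal.toReal_mul]
    change S.real Set.univ * m.real (Set.Iic r) / σ2 = _
    field_simp
  have hFFt : ∀ r, Ftil r = n.real (Set.Iic r) / (σ2 / S.real Set.univ) := fun r => by
    rw [hFtil, hν', hball n inferInstance hn0, ENNReal.toReal_mul]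
    change S.real Set.univ * n.real (Set.Iic r) / σ2 = _
    field_simp
  obtain ⟨hgm, hgmap⟩ := oneD_map m n hm0 hn0 (σ2 / S.real Set.univ) (by positivity)
    (hreal m hmu) (hreal n hnu) F Ftil hFF hFFt hFtilMono Finv hFinv
    (fun r => if F r < 1 then Finv (F r) else 0) (fun r => rfl)
  set g : ℝ → ℝ := fun r => if F r < 1 then Finv (F r) else 0 with hg
  have hTg : ∀ k, T k = (g ‖k‖ / ‖k‖) • k := fun k => by
    rw [hT]
    by_cases hk : k = 0
    · simp [hk]
    · by_cases h : F ‖k‖ < 1 <;> simp [hk, h, hg]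
  have hTm : Measurable T := by
    have h1 : T = fun k => (g ‖k‖ / ‖k‖) • k := funext hTg
    rw [h1]
    exact ((hgm.comp measurable_norm).div measurable_norm).smul measurable_id
  have hpos : ∀ᵐ p ∂(S.prod m), 0 < p.2 := by
    refine Measure.quasiMeasurePreserving_snd.ae (p := fun r : ℝ => 0 < r) ?_
    rw [ae_iff]
    convert hm0 using 2
    ext r; simp
  rw [hμ', hν', Measure.map_map hTm polarMap_meas, ← hgmap]
  have hprod : S.prod (Measure.map g m) = (S.prod m).map (Prod.map id g) := by
    rw [← Measure.map_prod_map _ _ measurable_id hgm, Measure.map_id]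
  rw [hprod, Measure.map_map polarMap_meas (measurable_id.prodMap hgm)]
  refine Measure.map_congr ?_
  filter_upwards [hpos] with p hp
  have h1 : ‖polarMap (E) p‖ = p.2 := by
    simp [polarMap, norm_smul, abs_of_pos hp]
  simp only [Function.comp_apply]
  rw [hTg, h1]
  simp only [polarMap, Prod.map, id]
  rw [smul_smul, div_mul_cancel₀ _ hp.ne']

open Classical in

/-- Monotone radial rearrangement: if `μ` and `ν` are isotropic measures on `ℝ^d` with
radial densities `C(‖k‖)` and `C̃(‖k‖)`, the same finite total mass `σ² > 0`, radial
cumulative distribution functions `F`, `F̃`, with `F̃` continuous, strictly increasing on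
`[0,∞)`, `F̃(0) = 0` and supremum `1` (so that it has an inverse `F̃⁻¹ : [0,1) → [0,∞)`),
then the radial map `T(k) = F̃⁻¹(F(‖k‖)) k/‖k‖` (set to `0` when `k = 0` or `F(‖k‖) ≥ 1`)
pushes `μ` forward to `ν`. -/
theorem statement3 (d : ℕ) (hd : 1 ≤ d) (C Ctil : ℝ → ℝ)
    (hCmeas : Measurable C) (hCtilmeas : Measurable Ctil)
    (hCnonneg : ∀ s, 0 ≤ s → 0 ≤ C s) (hCtilnonneg : ∀ s, 0 ≤ s → 0 ≤ Ctil s)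
    (μ ν : Measure (EuclideanSpace ℝ (Fin d)))
    (hμ : μ = volume.withDensity fun k => ENNReal.ofReal (C ‖k‖))
    (hν : ν = volume.withDensity fun k => ENNReal.ofReal (Ctil ‖k‖))
    (σ2 : ℝ) (hσ2 : 0 < σ2)
    (hμmass : μ Set.univ = ENNReal.ofReal σ2)
    (hνmass : ν Set.univ = ENNReal.ofReal σ2)
    (F Ftil : ℝ → ℝ)
    (hF : ∀ r, F r = (μ {k | ‖k‖ ≤ r}).toReal / σ2)
    (hFtil : ∀ r, Ftil r = (ν {k | ‖k‖ ≤ r}).toReal / σ2)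
    (hFtilCont : ContinuousOn Ftil (Set.Ici 0))
    (hFtilMono : StrictMonoOn Ftil (Set.Ici 0))
    (hFtil0 : Ftil 0 = 0)
    (hFtilSup : IsLUB (Ftil '' Set.Ici 0) 1)
    (Finv : ℝ → ℝ)
    (hFinv : ∀ u ∈ Set.Ico (0:ℝ) 1, 0 ≤ Finv u ∧ Ftil (Finv u) = u)
    (T : EuclideanSpace ℝ (Fin d) → EuclideanSpace ℝ (Fin d))
    (hT : ∀ k, T k = if k ≠ 0 ∧ F ‖k‖ < 1 then (Finv (F ‖k‖) / ‖k‖) • k else 0) :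
    Measure.map T μ = ν := by
  have : Nonempty (Fin d) := ⟨⟨0, by omega⟩⟩
  have hnt : Nontrivial (EuclideanSpace ℝ (Fin d)) := inferInstance
  have hc1 : Measurable fun r => ENNReal.ofReal (C r) := hCmeas.ennreal_ofReal
  have hc2 : Measurable fun r => ENNReal.ofReal (Ctil r) := hCtilmeas.ennreal_ofReal
  have hμ' := hμ.trans (polar_withDensity volume (fun r => ENNReal.ofReal (C r)) hc1)
  have hν' := hν.trans (polar_withDensity volume (fun r => ENNReal.ofReal (Ctil r)) hc2)
  have hat : NullSingletonClass ((radialRho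
      (Module.finrank ℝ (EuclideanSpace ℝ (Fin d)) - 1)).withDensity
      fun r => ENNReal.ofReal (C r)) :=
    ⟨fun x => withDensity_absolutelyContinuous _ _ (measure_singleton x)⟩
  refine radial_aux _ ?_ _ _ ?_ ?_ μ ν hμ' hν' σ2 hσ2
    hμmass hνmass F Ftil hF hFtil hFtilMono Finv hFinv T (fun k => ?_)
  · rw [Ne, Measure.measure_univ_eq_zero]
    exact Measure.toSphere_ne_zero _
  · exact withDensity_absolutelyContinuous _ _ (radialRho_Iic _)
  · exact withDensity_absolutelyContinuous _ _ (radialRho_Iic _)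
  · rw [hT k]
    congr
end

section
/- Let d ≥ 1 be an integer and L > 0. Let C⁰ : ℝ^d → ℂ, C¹₁, …, C¹_d : ℝ^d → ℂ and θ₁, …, θ_d : ℝ^d → ℂ all be continuous and L-periodic in each coordinate, and define G : ℝ^d × ℝ^d → ℂ by G(x,y) = C⁰(x-y) + Σ_{j=1}^d C¹_j(x-y)(θ_j(x) - θ_j(y)). Then for all m, n ∈ ℤ^d: if m + n ≠ 0 then Ĝ(m,n) = Σ_{j=1}^d θ̂_j(m+n) (Ĉ¹_j(-n) - Ĉ¹_j(m)), while Ĝ(m,-m) = Ĉ⁰(m). -/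
open MeasureTheory

/-- A function on `ℝ^d` is `L`-periodic in each coordinate. -/
def PeriodicEach (d : ℕ) (L : ℝ) (h : (Fin d → ℝ) → ℂ) : Prop :=
  ∀ (x : Fin d → ℝ) (j : Fin d), h (Function.update x j (x j + L)) = h x

/-- The `m`-th Fourier coefficient of an `L`-periodic function on `ℝ^d`:
`ĥ(m) = L^{-d} ∫_{[0,L)^d} h(x) e^{-2πi m·x/L} dx`. -/
noncomputable def fCoef (d : ℕ) (L : ℝ) (h : (Fin d → ℝ) → ℂ) (m : Fin d → ℤ) : ℂ :=
  (1 / (L : ℂ) ^ d) *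
    ∫ x in Set.univ.pi fun _ : Fin d => Set.Ico (0:ℝ) L,
      h x * Complex.exp (-(2 * (Real.pi : ℂ) * Complex.I *
        (∑ j, (m j : ℂ) * (x j : ℂ)) / (L : ℂ)))

/-- The `(m,n)`-th Fourier coefficient of an `L`-periodic function on `ℝ^d × ℝ^d`:
`Ĝ(m,n) = L^{-2d} ∫∫_{[0,L)^d × [0,L)^d} G(x,y) e^{-2πi (m·x + n·y)/L} dx dy`. -/
noncomputable def fCoef2 (d : ℕ) (L : ℝ) (G : (Fin d → ℝ) → (Fin d → ℝ) → ℂ)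
    (m n : Fin d → ℤ) : ℂ :=
  (1 / (L : ℂ) ^ (2 * d)) *
    ∫ x in Set.univ.pi fun _ : Fin d => Set.Ico (0:ℝ) L,
      ∫ y in Set.univ.pi fun _ : Fin d => Set.Ico (0:ℝ) L,
        G x y * Complex.exp (-(2 * (Real.pi : ℂ) * Complex.I *
          ((∑ j, (m j : ℂ) * (x j : ℂ)) + ∑ j, (n j : ℂ) * (y j : ℂ)) / (L : ℂ)))


/-- The character. -/
noncomputable def ec (d : ℕ) (L : ℝ) (m : Fin d → ℤ) (x : Fin d → ℝ) : ℂ :=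
  Complex.exp (-(2 * (Real.pi : ℂ) * Complex.I * (∑ j, (m j : ℂ) * (x j : ℂ)) / (L : ℂ)))

/-- The cube. -/
def cube (d : ℕ) (L : ℝ) : Set (Fin d → ℝ) := Set.univ.pi fun _ : Fin d => Set.Ico (0:ℝ) L

theorem ec_continuous (d : ℕ) (L : ℝ) (m : Fin d → ℤ) : Continuous (ec d L m) := by
  unfold ec; fun_prop

theorem ec_add (d : ℕ) (L : ℝ) (m : Fin d → ℤ) (x y : Fin d → ℝ) :
    ec d L m (x + y) = ec d L m x * ec d L m y := by
  unfold ec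
  rw [← Complex.exp_add]
  congr 1
  simp only [Pi.add_apply, Complex.ofReal_add, mul_add, Finset.sum_add_distrib]
  ring

theorem ec_add_left (d : ℕ) (L : ℝ) (m n : Fin d → ℤ) (x : Fin d → ℝ) :
    ec d L (m + n) x = ec d L m x * ec d L n x := by
  unfold ec
  rw [← Complex.exp_add]
  congr 1
  simp only [Pi.add_apply, Int.cast_add, add_mul, Finset.sum_add_distrib]
  ring

theorem ec_zero (d : ℕ) (L : ℝ) (x : Fin d → ℝ) : ec d L 0 x = 1 := by
  simp [ec]

theorem ec_neg_neg (d : ℕ) (L : ℝ) (m : Fin d → ℤ) (x : Fin d → ℝ) :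
    ec d L (-m) (-x) = ec d L m x := by
  simp [ec]

theorem ec_single (d : ℕ) (L : ℝ) (m : Fin d → ℤ) (j : Fin d) (a : ℝ) :
    ec d L m (Pi.single j a) =
      Complex.exp (-(2 * (Real.pi : ℂ) * Complex.I * ((m j : ℂ) * (a : ℂ)) / (L : ℂ))) := by
  unfold ec
  rw [Finset.sum_eq_single j]
  · simp
  · intro b _ hb
    simp [hb]
  · simp

theorem periodicEach_iff (d : ℕ) (L : ℝ) (h : (Fin d → ℝ) → ℂ) :
    PeriodicEach d L h ↔ ∀ x j, h (x + Pi.single j L) = h x := by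
  have : ∀ (x : Fin d → ℝ) (j : Fin d), Function.update x j (x j + L) = x + Pi.single j L := by
    intro x j
    ext i
    by_cases hi : i = j
    · subst hi; simp
    · simp [hi]
  simp only [PeriodicEach, this]

theorem ec_periodic (d : ℕ) (L : ℝ) (hL : 0 < L) (m : Fin d → ℤ) :
    PeriodicEach d L (ec d L m) := by
  rw [periodicEach_iff]
  intro x j
  have hL' : (L : ℂ) ≠ 0 := by exact_mod_cast hL.ne'
  rw [ec_add, ec_single]
  have : -(2 * (Real.pi : ℂ) * Complex.I * ((m j : ℂ) * (L : ℂ)) / (L : ℂ))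
      = ((-m j : ℤ) : ℂ) * (2 * Real.pi * Complex.I) := by
    field_simp
    push_cast
    ring
  rw [this, Complex.exp_int_mul_two_pi_mul_I, mul_one]

/-- lattice basis -/
noncomputable def lb (d : ℕ) (L : ℝ) (hL : 0 < L) : Module.Basis (Fin d) ℝ (Fin d → ℝ) :=
  (Pi.basisFun ℝ (Fin d)).isUnitSMul (w := fun _ => L) (fun _ => (isUnit_iff_ne_zero.2 hL.ne'))

theorem lb_apply (d : ℕ) (L : ℝ) (hL : 0 < L) (j : Fin d) : lb d L hL j = Pi.single j L := by
  simp [lb, Module.Basis.isUnitSMul_apply, ← Pi.single_smul']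

theorem lb_fd (d : ℕ) (L : ℝ) (hL : 0 < L) :
    ZSpan.fundamentalDomain (lb d L hL) = cube d L := by
  have key : ∀ (x : Fin d → ℝ) i, (lb d L hL).repr x i = x i / L := by
    intro x i
    have h := congrFun ((lb d L hL).sum_repr x) i
    simp only [lb_apply, Finset.sum_apply, Pi.smul_apply, smul_eq_mul] at h
    rw [Finset.sum_eq_single i] at h
    · rw [← h]; simp [hL.ne']
    · intro b _ hb
      simp [hb.symm]
    · simp
  ext x
  simp only [ZSpan.mem_fundamentalDomain, cube, Set.mem_pi, Set.mem_univ, true_imp_iff, key,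
    Set.mem_Ico]
  refine forall_congr' fun i => ?_
  rw [div_lt_one hL]
  constructor
  · rintro ⟨h1, h2⟩
    exact ⟨by have := mul_nonneg h1 hL.le; rwa [div_mul_cancel₀ _ hL.ne'] at this, h2⟩
  · rintro ⟨h1, h2⟩
    exact ⟨by positivity, h2⟩

theorem periodic_span (d : ℕ) (L : ℝ) (hL : 0 < L) (h : (Fin d → ℝ) → ℂ)
    (hp : PeriodicEach d L h) (v : Fin d → ℝ)
    (hv : v ∈ Submodule.span ℤ (Set.range (lb d L hL))) : ∀ x, h (v + x) = h x := by
  rw [periodicEach_iff] at hp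
  induction hv using Submodule.span_induction with
  | mem v hv =>
    obtain ⟨j, rfl⟩ := hv
    intro x
    rw [lb_apply, add_comm, hp]
  | zero => simp
  | add a b _ _ ha hb => intro x; rw [add_assoc, ha, hb]
  | smul k a _ ha =>
    intro x
    induction k using Int.induction_on generalizing x with
    | zero => simp
    | succ k ih => rw [add_smul, one_smul, add_assoc, ih, ha]
    | pred k ih =>
      rw [sub_smul, one_smul, ← ih x, ← ha]
      congr 1
      abel
      

theorem int_shift (d : ℕ) (L : ℝ) (hL : 0 < L) (F : (Fin d → ℝ) → ℂ)
    (hp : PeriodicEach d L F) (a : Fin d → ℝ) :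
    ∫ y in cube d L, F (a - y) = ∫ y in cube d L, F y := by
  have mp : MeasurePreserving (fun y : Fin d → ℝ => a - y) volume volume :=
    Measure.measurePreserving_sub_left volume a
  have me : MeasurableEmbedding (fun y : Fin d → ℝ => a - y) :=
    (MeasurableEquiv.subLeft a).measurableEmbedding
  rw [← mp.setIntegral_image_emb me]
  have h1 : IsAddFundamentalDomain (Submodule.span ℤ (Set.range (lb d L hL))).toAddSubgroup
      (cube d L) volume := by
    have := ZSpan.isAddFundamentalDomain' (lb d L hL) volume
    rwa [lb_fd] at this
  have h2 : IsAddFundamentalDomain (Submodule.span ℤ (Set.range (lb d L hL))).toAddSubgroup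
      ((fun y : Fin d → ℝ => a - y) '' cube d L) volume := by
    refine h1.image_of_equiv (Equiv.subLeft a) ?_ (Equiv.neg _) ?_
    · have hfun : ⇑(Equiv.subLeft a).symm = fun y : Fin d → ℝ => a - y := by
        ext y i
        simp [sub_eq_add_neg, add_comm]
      rw [hfun]
      exact mp.quasiMeasurePreserving
    · intro g x
      simp [AddSubgroup.vadd_def]
      abel
  have : Countable (Submodule.span ℤ (Set.range (lb d L hL))).toAddSubgroup :=
    inferInstanceAs (Countable (Submodule.span ℤ (Set.range (lb d L hL))))
  refine h2.setIntegral_eq h1 ?_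
  rintro ⟨v, hv⟩ x
  exact periodic_span d L hL F hp v hv x

theorem int_shift' (d : ℕ) (L : ℝ) (hL : 0 < L) (F : (Fin d → ℝ) → ℂ)
    (hp : PeriodicEach d L F) (a : Fin d → ℝ) :
    ∫ x in cube d L, F (x - a) = ∫ x in cube d L, F x := by
  have hp' : PeriodicEach d L (fun x => F (-x)) := by
    rw [periodicEach_iff] at hp ⊢
    intro x j
    refine (hp (-(x + Pi.single j L)) j).symm.trans ?_
    congr 1
    abel
  have h1 := int_shift d L hL _ hp' a
  have h2 := int_shift d L hL F hp 0
  simp only [neg_sub, zero_sub] at h1 h2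
  rw [h1, h2]

theorem PeriodicEach.mul' {d : ℕ} {L : ℝ} {f g : (Fin d → ℝ) → ℂ}
    (hf : PeriodicEach d L f) (hg : PeriodicEach d L g) :
    PeriodicEach d L (fun x => f x * g x) := by
  intro x j
  simp only [hf x j, hg x j]

theorem int_ec (d : ℕ) (L : ℝ) (hL : 0 < L) (k : Fin d → ℤ) (hk : k ≠ 0) :
    ∫ x in cube d L, ec d L k x = 0 := by
  obtain ⟨j, hj⟩ := Function.ne_iff.1 hk
  have hj' : (k j : ℂ) ≠ 0 := by exact_mod_cast hj
  have hL' : (L : ℂ) ≠ 0 := by exact_mod_cast hL.ne'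
  have h := int_shift' d L hL _ (ec_periodic d L hL k) (Pi.single j (L / (2 * (k j : ℝ))))
  have e : ec d L k (-(Pi.single j (L / (2 * (k j : ℝ))))) = -1 := by
    rw [← Pi.single_neg, ec_single, ← Complex.exp_pi_mul_I]
    congr 1
    push_cast
    field_simp
  simp only [sub_eq_add_neg, ec_add, e] at h
  rw [integral_mul_const] at h
  linear_combination (-1 / 2 : ℂ) * h

/-- Unnormalised coefficient. -/
noncomputable def jc (d : ℕ) (L : ℝ) (h : (Fin d → ℝ) → ℂ) (m : Fin d → ℤ) : ℂ :=
  ∫ x in cube d L, h x * ec d L m x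

theorem integrable2 (d : ℕ) (L : ℝ) (f : (Fin d → ℝ) × (Fin d → ℝ) → ℂ) (hf : Continuous f) :
    Integrable f ((volume.restrict (cube d L)).prod (volume.restrict (cube d L))) := by
  rw [Measure.prod_restrict]
  have hs : cube d L ⊆ Set.Icc (fun _ => 0) (fun _ => L) := by
    intro x hx
    exact ⟨fun i => (hx i trivial).1, fun i => (hx i trivial).2.le⟩
  exact (hf.continuousOn.integrableOn_compact (isCompact_Icc.prod isCompact_Icc)).mono_set
    (Set.prod_mono hs hs)

theorem ec_neg (d : ℕ) (L : ℝ) (m : Fin d → ℤ) (x : Fin d → ℝ) :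
    ec d L m x * ec d L (-m) x = 1 := by
  rw [← ec_add_left, add_neg_cancel, ec_zero]

theorem termA (d : ℕ) (L : ℝ) (hL : 0 < L) (C θ : (Fin d → ℝ) → ℂ)
    (hC : PeriodicEach d L C) (m n : Fin d → ℤ) :
    ∫ x in cube d L, ∫ y in cube d L, C (x - y) * θ x * (ec d L m x * ec d L n y)
      = jc d L θ (m + n) * jc d L C (-n) := by
  have key : ∀ x y, C (x - y) * θ x * (ec d L m x * ec d L n y) =
      (θ x * ec d L (m + n) x) * (C (x - y) * ec d L (-n) (x - y)) := by
    intro x y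
    rw [sub_eq_add_neg, ec_add, ec_neg_neg, ec_add_left]
    linear_combination (-C (x + -y) * θ x * ec d L m x * ec d L n y) * ec_neg d L n x
  simp only [key, integral_const_mul]
  have : ∀ x, ∫ y in cube d L, C (x - y) * ec d L (-n) (x - y) = jc d L C (-n) := fun x =>
    int_shift d L hL _ (hC.mul' (ec_periodic d L hL (-n))) x
  simp only [this, integral_mul_const]
  rfl

theorem termB (d : ℕ) (L : ℝ) (hL : 0 < L) (C θ : (Fin d → ℝ) → ℂ)
    (hC : PeriodicEach d L C) (hCc : Continuous C) (hθc : Continuous θ) (m n : Fin d → ℤ) :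
    ∫ x in cube d L, ∫ y in cube d L, C (x - y) * θ y * (ec d L m x * ec d L n y)
      = jc d L θ (m + n) * jc d L C m := by
  have h1 := ec_continuous d L m
  have h2 := ec_continuous d L n
  rw [integral_integral_swap (integrable2 d L _ (by unfold Function.uncurry; fun_prop))]
  have key : ∀ x y, C (x - y) * θ y * (ec d L m x * ec d L n y) =
      (θ y * ec d L (m + n) y) * (C (x - y) * ec d L m (x - y)) := by
    intro x y
    have e : ec d L m (-y) = ec d L (-m) y := by
      have := ec_neg_neg d L (-m) y
      rwa [neg_neg] at this
    rw [sub_eq_add_neg, ec_add, e, ec_add_left]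
    linear_combination (-C (x + -y) * θ y * ec d L m x * ec d L n y) * ec_neg d L m y
  simp only [key, integral_const_mul]
  have : ∀ y, ∫ x in cube d L, C (x - y) * ec d L m (x - y) = jc d L C m := fun y =>
    int_shift' d L hL _ (hC.mul' (ec_periodic d L hL m)) y
  simp only [this, integral_mul_const]
  rfl

theorem vol_cube (d : ℕ) (L : ℝ) (hL : 0 < L) :
    ∫ _ in cube d L, (1 : ℂ) = (L : ℂ) ^ d := by
  rw [setIntegral_const, Measure.real, cube, Real.volume_pi_Ico_toReal (fun _ => hL.le)]
  simp

theorem fCoef_eq (d : ℕ) (L : ℝ) (h : (Fin d → ℝ) → ℂ) (m : Fin d → ℤ) :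
    fCoef d L h m = (1 / (L : ℂ) ^ d) * jc d L h m := rfl

theorem main_eq (d : ℕ) (L : ℝ) (hL : 0 < L)
    (C0 : (Fin d → ℝ) → ℂ) (C1 θ : Fin d → (Fin d → ℝ) → ℂ)
    (hC0c : Continuous C0) (hC0p : PeriodicEach d L C0)
    (hC1c : ∀ j, Continuous (C1 j)) (hC1p : ∀ j, PeriodicEach d L (C1 j))
    (hθc : ∀ j, Continuous (θ j))
    (G : (Fin d → ℝ) → (Fin d → ℝ) → ℂ)
    (hG : ∀ x y, G x y = C0 (x - y) + ∑ j, C1 j (x - y) * (θ j x - θ j y))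
    (m n : Fin d → ℤ) :
    fCoef2 d L G m n = (1 / (L : ℂ) ^ (2 * d)) * (jc d L (fun _ => 1) (m + n) * jc d L C0 (-n) +
      ∑ j, (jc d L (θ j) (m + n) * jc d L (C1 j) (-n) - jc d L (θ j) (m + n) * jc d L (C1 j) m)) := by
  have h1 := ec_continuous d L m
  have h2 := ec_continuous d L n
  unfold fCoef2
  congr 1
  have e : ∀ x y, G x y * Complex.exp (-(2 * (Real.pi : ℂ) * Complex.I *
          ((∑ j, (m j : ℂ) * (x j : ℂ)) + ∑ j, (n j : ℂ) * (y j : ℂ)) / (L : ℂ)))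
      = C0 (x - y) * 1 * (ec d L m x * ec d L n y) +
        ∑ j, (C1 j (x - y) * θ j x * (ec d L m x * ec d L n y) -
          C1 j (x - y) * θ j y * (ec d L m x * ec d L n y)) := by
    intro x y
    have : Complex.exp (-(2 * (Real.pi : ℂ) * Complex.I *
          ((∑ j, (m j : ℂ) * (x j : ℂ)) + ∑ j, (n j : ℂ) * (y j : ℂ)) / (L : ℂ)))
        = ec d L m x * ec d L n y := by
      unfold ec
      rw [← Complex.exp_add]
      congr 1
      ring
    rw [this, hG, add_mul, Finset.sum_mul, mul_one]
    congr 1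
    refine Finset.sum_congr rfl fun j _ => ?_
    ring
  simp only [e]
  change ∫ x in cube d L, ∫ y in cube d L, _ = _
  rw [← termA d L hL C0 (fun _ => 1) hC0p]
  simp only [← termB d L hL _ _ (hC1p _) (hC1c _) (hθc _), ← termA d L hL _ _ (hC1p _)]
  have I0 := integrable2 d L (fun z => C0 (z.1 - z.2) * 1 * (ec d L m z.1 * ec d L n z.2))
    (by fun_prop)
  have IA := fun j => integrable2 d L
    (fun z => C1 j (z.1 - z.2) * θ j z.1 * (ec d L m z.1 * ec d L n z.2))
    (by have := hC1c j; have := hθc j; fun_prop)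
  have IB := fun j => integrable2 d L
    (fun z => C1 j (z.1 - z.2) * θ j z.2 * (ec d L m z.1 * ec d L n z.2))
    (by have := hC1c j; have := hθc j; fun_prop)
  have IAB := fun j => (IA j).sub (IB j)
  have IS := integrable_finsetSum Finset.univ (fun j _ => IAB j)
  rw [integral_integral (by
    refine (I0.add IS).congr (Filter.Eventually.of_forall fun z => ?_)
    simp [Function.uncurry])]
  rw [integral_integral I0]
  have JA := fun j => integral_integral
    (f := fun x y => C1 j (x - y) * θ j x * (ec d L m x * ec d L n y)) (IA j)
  have JB := fun j => integral_integral
    (f := fun x y => C1 j (x - y) * θ j y * (ec d L m x * ec d L n y)) (IB j)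
  simp only [JA, JB]
  rw [integral_add I0 (by simpa using IS)]
  congr 1
  refine (integral_finsetSum _ (fun j _ => IAB j)).trans ?_
  exact Finset.sum_congr rfl fun j _ => integral_sub (IA j) (IB j)

/-- First-order expansion in Fourier space: for
`G(x,y) = C⁰(x-y) + Σ_j C¹_j(x-y)(θ_j(x) - θ_j(y))` with all ingredients continuous and
`L`-periodic in each coordinate, if `m + n ≠ 0` then
`Ĝ(m,n) = Σ_j θ̂_j(m+n)(Ĉ¹_j(-n) - Ĉ¹_j(m))`, while `Ĝ(m,-m) = Ĉ⁰(m)`. -/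
theorem statement6 (d : ℕ) (hd : 1 ≤ d) (L : ℝ) (hL : 0 < L)
    (C0 : (Fin d → ℝ) → ℂ) (C1 θ : Fin d → (Fin d → ℝ) → ℂ)
    (hC0c : Continuous C0) (hC0p : PeriodicEach d L C0)
    (hC1c : ∀ j, Continuous (C1 j)) (hC1p : ∀ j, PeriodicEach d L (C1 j))
    (hθc : ∀ j, Continuous (θ j)) (hθp : ∀ j, PeriodicEach d L (θ j))
    (G : (Fin d → ℝ) → (Fin d → ℝ) → ℂ)
    (hG : ∀ x y, G x y = C0 (x - y) + ∑ j, C1 j (x - y) * (θ j x - θ j y))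
    (m n : Fin d → ℤ) :
    (m + n ≠ 0 →
        fCoef2 d L G m n =
          ∑ j, fCoef d L (θ j) (m + n) * (fCoef d L (C1 j) (-n) - fCoef d L (C1 j) m)) ∧
      fCoef2 d L G m (-m) = fCoef d L C0 m := by

  have hL' : (L : ℂ) ≠ 0 := by exact_mod_cast hL.ne'
  constructor
  · intro hmn
    rw [main_eq d L hL C0 C1 θ hC0c hC0p hC1c hC1p hθc G hG]
    have : jc d L (fun _ => 1) (m + n) = 0 := by
      simp only [jc, one_mul]
      exact int_ec d L hL _ hmn
    rw [this, zero_mul, zero_add, Finset.mul_sum]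
    refine Finset.sum_congr rfl fun j _ => ?_
    simp only [fCoef_eq]
    rw [two_mul, pow_add]
    field_simp
  · rw [main_eq d L hL C0 C1 θ hC0c hC0p hC1c hC1p hθc G hG]
    have : jc d L (fun _ => 1) (m + -m) = (L : ℂ) ^ d := by
      simp only [jc, one_mul, add_neg_cancel, ec_zero]
      exact vol_cube d L hL
    rw [this]
    simp only [neg_neg, sub_self, Finset.sum_const_zero, add_zero, fCoef_eq]
    rw [two_mul, pow_add]
    field_simp
end

section
/- Let d ≥ 1 be an integer, c₀ > 0 a real number, η : ℝ^d → ℝ^d a map, and A a real d × d matrix. Suppose there exist convex differentiable functions φ, ψ : ℝ^d → ℝ such that ∇φ(k) = k - c₀ Aᵀη(k) and ∇ψ(k) = k + c₀ Aᵀη(k) for all k ∈ ℝ^d. Then: (i) for every c ∈ [-c₀, c₀], the map T_c(k) = k + c Aᵀη(k) is the gradient of a convex differentiable function on ℝ^d; (ii) for every c with |c| < c₀, T_c satisfies ‖T_c(x) - T_c(y)‖ ≥ (1 - |c|/c₀) ‖x - y‖ for all x, y, and for every Borel measure μ on ℝ^d that is absolutely continuous with respect to Lebesgue measure, the pushforward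 of μ under T_c is absolutely continuous with respect to Lebesgue measure. -/
open MeasureTheory

/-- The action of a `d × d` real matrix on a vector of `EuclideanSpace ℝ (Fin d)`. -/
noncomputable def matVec (d : ℕ) (A : Matrix (Fin d) (Fin d) ℝ)
    (v : EuclideanSpace ℝ (Fin d)) : EuclideanSpace ℝ (Fin d) :=
  (EuclideanSpace.equiv (Fin d) ℝ).symm (A.mulVec (EuclideanSpace.equiv (Fin d) ℝ v))

open scoped RealInnerProductSpace in
theorem gradient_monotone_of_convexOn {E : Type*} [NormedAddCommGroup E] [InnerProductSpace ℝ E]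
    [CompleteSpace E] {f : E → ℝ} (hc : ConvexOn ℝ Set.univ f) (hf : Differentiable ℝ f)
    (x y : E) : 0 ≤ ⟪gradient f x - gradient f y, x - y⟫ := by
  have hder : ∀ t : ℝ, HasDerivAt (fun t : ℝ => f (AffineMap.lineMap y x t))
      (fderiv ℝ f (AffineMap.lineMap y x t) (x - y)) t := by
    intro t
    exact (hf _).hasFDerivAt.comp_hasDerivAt t AffineMap.hasDerivAt_lineMap
  have hconv : ConvexOn ℝ Set.univ (fun t : ℝ => f (AffineMap.lineMap y x t)) := by
    exact hc.comp_affineMap (AffineMap.lineMap y x : ℝ →ᵃ[ℝ] E)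
  have hm := hconv.monotoneOn_deriv (fun t _ => (hder t).differentiableAt)
  have h := hm (Set.mem_univ 0) (Set.mem_univ 1) zero_le_one
  rw [(hder 0).deriv, (hder 1).deriv] at h
  simp only [AffineMap.lineMap_apply_zero, AffineMap.lineMap_apply_one] at h
  rw [inner_sub_left, inner_gradient_left, inner_gradient_left]
  linarith

theorem map_absolutelyContinuous_of_expanding (d : ℕ)
    (T : EuclideanSpace ℝ (Fin d) → EuclideanSpace ℝ (Fin d)) (K : NNReal)
    (hT : AntilipschitzWith K T)
    (μ : Measure (EuclideanSpace ℝ (Fin d))) (hμ : μ ≪ volume) :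
    Measure.map T μ ≪ volume := by
  by_cases hm : AEMeasurable T μ
  · have hH : (Measure.hausdorffMeasure (Module.finrank ℝ (EuclideanSpace ℝ (Fin d))) :
        Measure (EuclideanSpace ℝ (Fin d))) ≪ volume :=
      Measure.absolutelyContinuous_isAddHaarMeasure _ _
    have hH' : volume ≪ (Measure.hausdorffMeasure (Module.finrank ℝ (EuclideanSpace ℝ (Fin d))) :
        Measure (EuclideanSpace ℝ (Fin d))) :=
      Measure.absolutelyContinuous_isAddHaarMeasure _ _
    refine Measure.AbsolutelyContinuous.mk fun s hs h0 => ?_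
    rw [Measure.map_apply_of_aemeasurable hm hs]
    apply hμ
    apply hH'
    have h1 := hT.hausdorffMeasure_preimage_le
      (d := (Module.finrank ℝ (EuclideanSpace ℝ (Fin d)) : ℝ)) (Nat.cast_nonneg _) s
    rw [hH h0, mul_zero] at h1
    exact le_antisymm h1 (zero_le)
  · rw [Measure.map_of_not_aemeasurable hm]
    exact Measure.AbsolutelyContinuous.zero _

/-- Symmetric two-sided cut locus claim: if both `k ↦ k - c₀Aᵀη(k)` and
`k ↦ k + c₀Aᵀη(k)` are gradients of convex differentiable functions, then (i) for every
`c ∈ [-c₀, c₀]` the map `T_c(k) = k + cAᵀη(k)` is the gradient of a convex differentiable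
function, and (ii) for `|c| < c₀`, `T_c` is expanding with constant `1 - |c|/c₀` and
pushes absolutely continuous measures to absolutely continuous measures. -/
theorem statement14 (d : ℕ) (hd : 1 ≤ d) (c₀ : ℝ) (hc₀ : 0 < c₀)
    (η : EuclideanSpace ℝ (Fin d) → EuclideanSpace ℝ (Fin d))
    (A : Matrix (Fin d) (Fin d) ℝ)
    (φ ψ : EuclideanSpace ℝ (Fin d) → ℝ)
    (hφconv : ConvexOn ℝ Set.univ φ) (hφdiff : Differentiable ℝ φ)
    (hψconv : ConvexOn ℝ Set.univ ψ) (hψdiff : Differentiable ℝ ψ)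
    (hφgrad : ∀ k, gradient φ k = k - c₀ • matVec d A.transpose (η k))
    (hψgrad : ∀ k, gradient ψ k = k + c₀ • matVec d A.transpose (η k)) :
    (∀ c : ℝ, c ∈ Set.Icc (-c₀) c₀ →
        ∃ χ : EuclideanSpace ℝ (Fin d) → ℝ,
          ConvexOn ℝ Set.univ χ ∧ Differentiable ℝ χ ∧
            ∀ k, gradient χ k = k + c • matVec d A.transpose (η k)) ∧
      ∀ c : ℝ, |c| < c₀ →
        (∀ x y : EuclideanSpace ℝ (Fin d),
            (1 - |c| / c₀) * ‖x - y‖ ≤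
              ‖(x + c • matVec d A.transpose (η x)) - (y + c • matVec d A.transpose (η y))‖) ∧
          ∀ μ : Measure (EuclideanSpace ℝ (Fin d)), μ ≪ volume →
            Measure.map (fun k => k + c • matVec d A.transpose (η k)) μ ≪ volume := by
  constructor
  · rintro c ⟨h1, h2⟩
    have ha : 0 ≤ (1 - c / c₀) / 2 := by
      have : c / c₀ ≤ 1 := (div_le_one hc₀).2 h2
      linarith
    have hb : 0 ≤ (1 + c / c₀) / 2 := by
      have : -1 ≤ c / c₀ := (le_div_iff₀ hc₀).2 (by linarith)
      linarith
    refine ⟨fun k => ((1 - c / c₀) / 2) • φ k + ((1 + c / c₀) / 2) • ψ k,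
      (hφconv.smul ha).add (hψconv.smul hb),
      (hφdiff.const_smul ((1 - c / c₀) / 2)).add (hψdiff.const_smul ((1 + c / c₀) / 2)), fun k => ?_⟩
    have e : ∀ f : EuclideanSpace ℝ (Fin d) → ℝ, Differentiable ℝ f →
        HasFDerivAt f (InnerProductSpace.toDual ℝ _ (gradient f k)) k :=
      fun f hf => (hf k).hasGradientAt.hasFDerivAt
    have h := ((e φ hφdiff).const_smul ((1 - c / c₀) / 2)).add
      ((e ψ hψdiff).const_smul ((1 + c / c₀) / 2))
    have hg := h.hasGradientAt.gradient
    refine Eq.trans hg ?_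
    rw [hφgrad, hψgrad]
    simp only [map_add, map_smulₛₗ, LinearIsometryEquiv.symm_apply_apply]
    simp only [starRingEnd_apply, star_trivial]
    match_scalars <;> field_simp <;> ring
  · intro c hc
    have hpos : 0 < 1 - |c| / c₀ := by
      have : |c| / c₀ < 1 := (div_lt_one hc₀).2 hc
      linarith
    have key : ∀ x y : EuclideanSpace ℝ (Fin d),
        (1 - |c| / c₀) * ‖x - y‖ ≤
          ‖(x + c • matVec d A.transpose (η x)) - (y + c • matVec d A.transpose (η y))‖ := by
      intro x y
      have h1 := gradient_monotone_of_convexOn hφconv hφdiff x y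
      have h2 := gradient_monotone_of_convexOn hψconv hψdiff x y
      rw [hφgrad, hφgrad] at h1
      rw [hψgrad, hψgrad] at h2
      generalize matVec d A.transpose (η x) = u at *
      generalize matVec d A.transpose (η y) = v at *
      rw [show x - c₀ • u - (y - c₀ • v) = (x - y) - c₀ • (u - v) by module, inner_sub_left,
        real_inner_smul_left, real_inner_self_eq_norm_sq] at h1
      rw [show x + c₀ • u - (y + c₀ • v) = (x - y) + c₀ • (u - v) by module, inner_add_left,
        real_inner_smul_left, real_inner_self_eq_norm_sq] at h2
      have h3 := real_inner_le_norm (x + c • u - (y + c • v)) (x - y)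
      rw [show x + c • u - (y + c • v) = (x - y) + c • (u - v) by module, inner_add_left,
        real_inner_smul_left, real_inner_self_eq_norm_sq] at h3
      rw [show x + c • u - (y + c • v) = (x - y) + c • (u - v) by module]
      generalize inner ℝ (u - v) (x - y) = p at *
      have hp : |p| ≤ ‖x - y‖ ^ 2 / c₀ := by
        rw [abs_le]
        constructor
        · rw [← neg_div, div_le_iff₀ hc₀]
          linarith
        · rw [le_div_iff₀ hc₀]
          linarith
      have hcp : -(|c| * (‖x - y‖ ^ 2 / c₀)) ≤ c * p := by
        have := mul_le_mul_of_nonneg_left hp (abs_nonneg c)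
        have h5 := neg_abs_le (c * p)
        rw [abs_mul] at h5
        linarith
      rcases (norm_nonneg (x - y)).eq_or_lt with h0 | h0
      · rw [← h0, mul_zero]
        exact norm_nonneg _
      · refine le_of_mul_le_mul_right ?_ h0
        refine le_trans (le_of_eq ?_) (le_trans (add_le_add_right hcp (‖x - y‖ ^ 2)) h3)
        ring
    refine ⟨key, fun μ hμ => ?_⟩
    refine map_absolutelyContinuous_of_expanding d _ (Real.toNNReal (1 - |c| / c₀)⁻¹) ?_ μ hμ
    refine AntilipschitzWith.of_le_mul_dist fun x y => ?_
    rw [Real.coe_toNNReal _ (inv_nonneg.2 hpos.le), dist_eq_norm, dist_eq_norm,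
      inv_mul_eq_div, le_div_iff₀ hpos, mul_comm]
    exact key x y
end
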